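/- Fix a natural number n ≥ 1 and a real number Δ > 0, and set r = (n + Δ² − 2)/2; assume r ≠ 0. Define, for m ∈ ℕ, J_{m,n}(Δ) = (1/(2^{n/2−1} Γ(n/2))) ∫₀^∞ ( √(2/π) ∫₀^{s/Δ} e^{−x²/2} dx )^m s^{n−1} e^{−s²/2} ds, and let C(n,Δ) = π^{Δ²/2} Δ^n Γ(Δ²)/Γ(n/2). Then, as m → ∞, J_{m,n}(Δ) = (C(n,Δ)/(m+1)^{Δ²}) · ( (log(m+1))^r − (r/2)·log(log(m+1))·(log(m+1))^{r−1} + O((log(m+1))^{r−1}) ); that is, the function m ↦ J_{m,n}(Δ) − (C(n,Δ)/(m+1)^{Δ²})·((log(m+1))^r − (r/2)·log(log(m+1))·(log(m+1))^{r−1}) is big-O of m ↦ (m+1)^{−Δ²}(log(m+1))^{r−1} along m → ∞. -/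

import Mathlib

/-!
Write `F = cdf` for the half-normal distribution function, `Q = 1 - F` for its tail, `q = F'`,
`a = Δ ^ 2`, `M = m + 1` and `ℓ = log M`. After the substitution `s = Δ x`, the integral is
`∫ F ^ m x ^ (n - 1) exp (-a x ^ 2 / 2) dx` over `(0, ∞)` (`Jmn_eq`). The factor `F ^ m`
concentrates it where `Q x` is of order `1 / M`.

With `y = 1 + x ^ 2 / 2`, the Mills ratio satisfies `1 ≤ Q √(2y) / q ≤ 1 + 3 / y` for all `x > 0`
(`one_le_mills`, `mills_le`). This has two consequences. The integrand besides `F ^ m` equals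
`K y ^ r (1 + O(1 / y))` times the weight `Q ^ (a - 1) q` (`integrand_eq`, `factor_bound`), and
`y + (log y) / 2 = -log Q + O(1)` (`log_tail_bound`). The map `y ↦ y + (log y) / 2` has
approximate inverse `ℓ ↦ ℓ - (log ℓ) / 2`, whose `r`-th power is
`ℓ ^ r - (r / 2) log ℓ ℓ ^ (r - 1) + O(ℓ ^ (r - 1))` (`approxInv_rpow`). Hence replacing `y ^ r` by
this two-term expansion at `ℓ = log M` costs `O(ℓ ^ (r - 1))` times a power of
`1 + |log (Q M)|`; Peetre's inequality makes this uniform in `x`, and the power is absorbed by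
`(Q M) ^ δ + (Q M) ^ (-δ)` (`integrand_bound`).

The substitution `t = F x` turns `∫ F ^ m Q ^ (b - 1) q` into the Beta integral
`Γ(b) Γ(M) / Γ(M + b)` (`weight_integral`), and log-convexity of `Γ` gives
`Γ(M) / Γ(M + b) = M ^ (-b) (1 + O(1 / M))` (`Gamma_ratio_asymp`). Taking `b = a` produces the main
term, and `b = a ± δ` with `δ = a / 2` bounds the error by `O(M ^ (-a) ℓ ^ (r - 1))`
(`integral_asymp`).
-/

open MeasureTheory Asymptotics Filter

/-- The integral `J_{m,n}(Δ)` from the paper. -/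
noncomputable def Jmn (m n : ℕ) (Δ : ℝ) : ℝ :=
  (1 / (2 ^ ((n : ℝ) / 2 - 1) * Real.Gamma ((n : ℝ) / 2))) *
    ∫ s in Set.Ioi (0 : ℝ),
      (Real.sqrt (2 / Real.pi) * ∫ x in Set.Ioo 0 (s / Δ), Real.exp (-x ^ 2 / 2)) ^ m *
        (s ^ (n - 1) * Real.exp (-s ^ 2 / 2))

namespace HalfNormal

open Set Topology

/-! ### Power functions at comparable arguments -/

lemma one_add_rpow_le_exp (k δ : ℝ) (hk : 0 ≤ k) (hδ : 0 < δ) :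
    ∃ C : ℝ, 0 < C ∧ ∀ v : ℝ, 0 ≤ v → (1 + v) ^ k ≤ C * Real.exp (δ * v) := by
  set c : ℝ := min 1 (δ / (k + 1)) with hc
  have hk1 : 0 < k + 1 := by linarith
  have hc0 : 0 < c := lt_min one_pos (by positivity)
  refine ⟨(c⁻¹) ^ (k + 1), by positivity, fun v hv => ?_⟩
  have h1 : 1 + v ≤ c⁻¹ * Real.exp (δ * v / (k + 1)) := by
    rw [inv_mul_eq_div, le_div_iff₀ hc0]
    have e1 := Real.add_one_le_exp (δ * v / (k + 1))
    have e2 : c ≤ 1 := min_le_left _ _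
    have e3 : c * v ≤ δ / (k + 1) * v := mul_le_mul_of_nonneg_right (min_le_right _ _) hv
    have e4 : δ / (k + 1) * v = δ * v / (k + 1) := by ring
    nlinarith
  calc (1 + v) ^ k ≤ (1 + v) ^ (k + 1) :=
        Real.rpow_le_rpow_of_exponent_le (by linarith) (by linarith)
    _ ≤ (c⁻¹ * Real.exp (δ * v / (k + 1))) ^ (k + 1) :=
        Real.rpow_le_rpow (by linarith) h1 hk1.le
    _ = (c⁻¹) ^ (k + 1) * Real.exp (δ * v) := by
        rw [Real.mul_rpow (by positivity) (by positivity), ← Real.exp_mul]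
        congr 2
        field_simp

/-- Peetre's inequality on `[1, ∞)`: moving the base of a power by `d` costs at most a factor
`(1 + d) ^ |s|`, whatever the sign of the exponent. -/
lemma peetre {y z : ℝ} (hy : 1 ≤ y) (hz : 1 ≤ z) (s : ℝ) :
    y ^ s ≤ z ^ s * (1 + |y - z|) ^ |s| := by
  have hy0 : 0 < y := by linarith
  have hz0 : 0 < z := by linarith
  have hd : 0 ≤ |y - z| := abs_nonneg _
  rcases le_total 0 s with hs | hs
  · rw [abs_of_nonneg hs, ← Real.mul_rpow hz0.le (by positivity)]
    apply Real.rpow_le_rpow hy0.le _ hs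
    nlinarith [le_abs_self (y - z)]
  · rw [abs_of_nonpos hs]
    have h : z ^ (-s) ≤ y ^ (-s) * (1 + |y - z|) ^ (-s) := by
      rw [← Real.mul_rpow hy0.le (by positivity)]
      apply Real.rpow_le_rpow hz0.le _ (by linarith)
      nlinarith [neg_abs_le (y - z)]
    have h1 : y ^ s * y ^ (-s) = 1 := by rw [← Real.rpow_add hy0]; simp
    have h2 : z ^ s * z ^ (-s) = 1 := by rw [← Real.rpow_add hz0]; simp
    have hys : 0 < y ^ s := by positivity
    have hzs : 0 < z ^ s := by positivity
    calc y ^ s = (y ^ s * z ^ s) * z ^ (-s) := by rw [mul_assoc, h2, mul_one]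
      _ ≤ (y ^ s * z ^ s) * (y ^ (-s) * (1 + |y - z|) ^ (-s)) :=
          mul_le_mul_of_nonneg_left h (by positivity)
      _ = (y ^ s * y ^ (-s)) * (z ^ s * (1 + |y - z|) ^ (-s)) := by ring
      _ = _ := by rw [h1, one_mul]

lemma abs_sub_le_of_mem_uIcc' {y z t : ℝ} (ht : t ∈ uIcc z y) : |t - z| ≤ |y - z| :=
  abs_sub_left_of_mem_uIcc ht

lemma one_le_of_mem_uIcc {y z t : ℝ} (hy : 1 ≤ y) (hz : 1 ≤ z) (ht : t ∈ uIcc z y) : 1 ≤ t :=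
  le_trans (le_min hz hy) ht.1

lemma abs_rpow_sub_rpow_le {y z : ℝ} (hy : 1 ≤ y) (hz : 1 ≤ z) (s : ℝ) :
    |y ^ s - z ^ s| ≤ |s| * z ^ (s - 1) * (1 + |y - z|) ^ |s - 1| * |y - z| := by
  have hz0 : 0 < z := by linarith
  have := Convex.norm_image_sub_le_of_norm_hasDerivWithin_le (s := uIcc z y)
    (f := fun t : ℝ => t ^ s) (f' := fun t => s * t ^ (s - 1))
    (C := |s| * z ^ (s - 1) * (1 + |y - z|) ^ |s - 1|) (x := z) (y := y)
    (fun t ht => (Real.hasDerivAt_rpow_const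
      (Or.inl (by linarith [one_le_of_mem_uIcc hy hz ht]))).hasDerivWithinAt)
    (fun t ht => ?_) (convex_uIcc z y) left_mem_uIcc right_mem_uIcc
  · simpa using this
  · have ht1 := one_le_of_mem_uIcc hy hz ht
    have h0 : 0 ≤ t ^ (s - 1) := by positivity
    rw [Real.norm_eq_abs, abs_mul, abs_of_nonneg h0, mul_assoc]
    refine mul_le_mul_of_nonneg_left ((peetre ht1 hz (s - 1)).trans ?_) (abs_nonneg _)
    refine mul_le_mul_of_nonneg_left ?_ (by positivity)
    exact Real.rpow_le_rpow (by positivity) (by linarith [abs_sub_le_of_mem_uIcc' ht])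
      (abs_nonneg _)

/-- Second-order version of `abs_rpow_sub_rpow_le`. -/
lemma abs_rpow_sub_taylor_le {y z : ℝ} (hy : 1 ≤ y) (hz : 1 ≤ z) (s : ℝ) :
    |y ^ s - (z ^ s + s * z ^ (s - 1) * (y - z))| ≤
      |s| * |s - 1| * z ^ (s - 2) * (1 + |y - z|) ^ |s - 2| * |y - z| * |y - z| := by
  have hz0 : 0 < z := by linarith
  have := Convex.norm_image_sub_le_of_norm_hasDerivWithin_le (s := uIcc z y)
    (f := fun t : ℝ => t ^ s - s * z ^ (s - 1) * t)
    (f' := fun t => s * t ^ (s - 1) - s * z ^ (s - 1))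
    (C := |s| * |s - 1| * z ^ (s - 2) * (1 + |y - z|) ^ |s - 2| * |y - z|) (x := z) (y := y)
    (fun t ht => ?_) (fun t ht => ?_) (convex_uIcc z y) left_mem_uIcc right_mem_uIcc
  · rw [Real.norm_eq_abs, Real.norm_eq_abs] at this
    convert this using 2
    ring
  · have h1 := (Real.hasDerivAt_rpow_const (x := t) (p := s)
      (Or.inl (by linarith [one_le_of_mem_uIcc hy hz ht])))
    have h2 := (hasDerivAt_id t).const_mul (s * z ^ (s - 1))
    have h3 := (h1.sub h2).hasDerivWithinAt (s := uIcc z y)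
    rw [mul_one] at h3
    exact h3
  · have ht1 := one_le_of_mem_uIcc hy hz ht
    have h := abs_rpow_sub_rpow_le ht1 hz (s - 1)
    have hd := abs_sub_le_of_mem_uIcc' ht
    rw [show s - 1 - 1 = s - 2 by ring] at h
    rw [Real.norm_eq_abs, ← mul_sub, abs_mul]
    calc |s| * |t ^ (s - 1) - z ^ (s - 1)|
        ≤ |s| * (|s - 1| * z ^ (s - 2) * (1 + |t - z|) ^ |s - 2| * |t - z|) := by gcongr
      _ ≤ |s| * (|s - 1| * z ^ (s - 2) * (1 + |y - z|) ^ |s - 2| * |y - z|) := by gcongr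
      _ = _ := by ring

/-- The approximate inverse `ℓ ↦ ℓ - log ℓ / 2` of `y ↦ y + log y / 2`. -/
noncomputable def approxInv (l : ℝ) : ℝ := l - Real.log l / 2

/-- The two-term expansion `ℓ ^ r - (r / 2) * log ℓ * ℓ ^ (r - 1)` of `(approxInv ℓ) ^ r`. -/
noncomputable def mainTerm (r l : ℝ) : ℝ := l ^ r - r / 2 * Real.log l * l ^ (r - 1)

lemma half_le_approxInv {l : ℝ} (hl : 1 ≤ l) : (l + 1) / 2 ≤ approxInv l := by
  have := Real.log_le_sub_one_of_pos (show 0 < l by linarith)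
  unfold approxInv; linarith

lemma approxInv_le {l : ℝ} (hl : 1 ≤ l) : approxInv l ≤ l := by
  have := Real.log_nonneg hl
  unfold approxInv; linarith

lemma approxInv_rpow_le {l : ℝ} (hl : 1 ≤ l) (s : ℝ) :
    approxInv l ^ s ≤ 2 ^ |s| * l ^ s := by
  have h1 := half_le_approxInv hl
  have h2 := approxInv_le hl
  have hz : 0 < approxInv l := by linarith
  rcases le_total 0 s with hs | hs
  · have e1 : approxInv l ^ s ≤ l ^ s := Real.rpow_le_rpow hz.le h2 hs
    have e2 : (1 : ℝ) ≤ 2 ^ |s| := Real.one_le_rpow (by norm_num) (abs_nonneg _)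
    have e3 : 0 ≤ l ^ s := by positivity
    nlinarith
  · calc approxInv l ^ s ≤ (l / 2) ^ s :=
          Real.rpow_le_rpow_of_nonpos (by linarith) (by linarith) hs
      _ = 2 ^ |s| * l ^ s := by
          rw [Real.div_rpow (by linarith) (by norm_num), abs_of_nonpos hs,
            Real.rpow_neg (by norm_num)]
          ring

lemma approxInv_rpow (r : ℝ) : ∃ C : ℝ, 0 < C ∧ ∀ l : ℝ, 1 ≤ l →
    |approxInv l ^ r - mainTerm r l| ≤ C * l ^ (r - 1) := by
  obtain ⟨C, hC, h⟩ := one_add_rpow_le_exp (|r - 2| + 2) 1 (by positivity) one_pos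
  refine ⟨|r| * |r - 1| * C + 1, by positivity, fun l hl => ?_⟩
  have hl0 : 0 < l := by linarith
  have hlog := Real.log_nonneg hl
  have hz : 1 ≤ approxInv l := by linarith [half_le_approxInv hl]
  have ht := abs_rpow_sub_taylor_le hz hl r
  have hd : approxInv l - l = -(Real.log l / 2) := by unfold approxInv; ring
  have hd' : |approxInv l - l| ≤ Real.log l := by
    rw [hd, abs_neg, abs_of_nonneg (by positivity)]; linarith
  have hm : mainTerm r l = l ^ r + r * l ^ (r - 1) * (approxInv l - l) := by
    rw [hd]; unfold mainTerm; ring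
  rw [hm]
  refine ht.trans ?_
  have hv := h _ hlog
  rw [one_mul, Real.exp_log hl0] at hv
  have hp : l ^ (r - 2) * l = l ^ (r - 1) := by
    rw [← Real.rpow_add_one hl0.ne']; congr 1; ring
  have hlr : 0 ≤ l ^ (r - 1) := by positivity
  calc |r| * |r - 1| * l ^ (r - 2) * (1 + |approxInv l - l|) ^ |r - 2| * |approxInv l - l|
        * |approxInv l - l|
      ≤ |r| * |r - 1| * l ^ (r - 2) * (1 + Real.log l) ^ |r - 2| * (1 + Real.log l)
        * (1 + Real.log l) := by gcongr <;> linarith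
    _ = |r| * |r - 1| * l ^ (r - 2) * (1 + Real.log l) ^ (|r - 2| + 2) := by
        rw [Real.rpow_add (by linarith)]
        norm_num
        ring
    _ ≤ |r| * |r - 1| * l ^ (r - 2) * (C * l) := by gcongr
    _ = |r| * |r - 1| * C * (l ^ (r - 2) * l) := by ring
    _ ≤ _ := by rw [hp]; nlinarith

lemma abs_mainTerm_le (r : ℝ) {l : ℝ} (hl : 1 ≤ l) :
    |mainTerm r l| ≤ (1 + |r|) * (l * l ^ (r - 1)) := by
  have hl0 : 0 < l := by linarith
  have hlog := Real.log_nonneg hl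
  have h1 := Real.log_le_sub_one_of_pos hl0
  have hp : l ^ r = l * l ^ (r - 1) := by
    rw [mul_comm, ← Real.rpow_add_one hl0.ne']; congr 1; ring
  have h0 : 0 ≤ l ^ (r - 1) := by positivity
  unfold mainTerm
  rw [hp, ← sub_mul, abs_mul, abs_of_nonneg h0, ← mul_assoc]
  refine mul_le_mul_of_nonneg_right ?_ h0
  refine (abs_sub _ _).trans ?_
  rw [abs_of_pos hl0, abs_mul, abs_of_nonneg hlog, abs_div, abs_two]
  nlinarith [mul_le_mul_of_nonneg_left (show Real.log l ≤ l by linarith) (abs_nonneg r),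
    mul_nonneg (abs_nonneg r) hlog]

/-- Since `y ↦ y + log y / 2` expands distances, an additive error in its value
bounds the error in `y`. -/
lemma abs_sub_approxInv_le {y l : ℝ} (hy : 1 ≤ y) (hl : 1 ≤ l) :
    |y - approxInv l| ≤ |y + Real.log y / 2 - l| + 1 := by
  have hz1 := half_le_approxInv hl
  have hz2 := approxInv_le hl
  set z := approxInv l with hz
  have hz0 : 0 < z := by linarith
  have hl0 : 0 < l := by linarith
  -- the defect of the approximate inverse is `log (l / z) / 2 ≤ 1 / 2`, because `l ≤ 2 * z`
  have e1 : Real.log l - Real.log z ≤ 1 := by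
    rw [← Real.log_div hl0.ne' hz0.ne']
    have : l / z ≤ 2 := by rw [div_le_iff₀ hz0]; linarith
    have h2 := Real.log_le_sub_one_of_pos (show 0 < l / z by positivity)
    linarith
  have e2 : 0 ≤ Real.log l - Real.log z := by
    have := Real.log_le_log hz0 hz2; linarith
  have e3 : l = z + Real.log l / 2 := by rw [hz]; unfold approxInv; ring
  rcases le_total y z with h | h
  · have e4 := Real.log_le_log (by linarith) h
    rw [abs_of_nonpos (by linarith)]
    have := neg_abs_le (y + Real.log y / 2 - l)
    linarith
  · have e4 := Real.log_le_log hz0 h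
    rw [abs_of_nonneg (by linarith)]
    have := le_abs_self (y + Real.log y / 2 - l)
    linarith

/-! ### Gamma quotients and the Beta integral -/

/-- Log-convexity of `Γ`: the slope of `log Γ` over `[x, x + b]` lies between its slopes
`log (x - 1)` over `[x - 1, x]` and `log (x + b)` over `[x + b, x + b + 1]`. -/
lemma Gamma_ratio_bounds {x b : ℝ} (hx : 1 < x) (hb : 0 < b) :
    (x - 1) ^ b * Real.Gamma x ≤ Real.Gamma (x + b) ∧
      Real.Gamma (x + b) ≤ (x + b) ^ b * Real.Gamma x := by
  have hconv := Real.convexOn_log_Gamma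
  have hx0 : 0 < x := by linarith
  have g0 := Real.Gamma_pos_of_pos (show 0 < x - 1 by linarith)
  have g1 := Real.Gamma_pos_of_pos hx0
  have g2 := Real.Gamma_pos_of_pos (show 0 < x + b by linarith)
  have r1 : Real.log (Real.Gamma x) = Real.log (x - 1) + Real.log (Real.Gamma (x - 1)) := by
    have := Real.Gamma_add_one (s := x - 1) (by linarith)
    rw [sub_add_cancel] at this
    rw [this, Real.log_mul (by linarith) g0.ne']
  have r2 : Real.log (Real.Gamma (x + b + 1)) =
      Real.log (x + b) + Real.log (Real.Gamma (x + b)) := by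
    rw [Real.Gamma_add_one (by linarith), Real.log_mul (by linarith) g2.ne']
  have s1 := hconv.slope_mono_adjacent (x := x - 1) (y := x) (z := x + b)
    (by simp; linarith) (by simp; linarith) (by linarith) (by linarith)
  have s2 := hconv.slope_mono_adjacent (x := x) (y := x + b) (z := x + b + 1)
    (by simpa) (by simp; linarith) (by linarith) (by linarith)
  simp only [Function.comp_apply] at s1 s2
  rw [show x - (x - 1) = 1 by ring, div_one, show x + b - x = b by ring, le_div_iff₀ hb] at s1
  rw [show x + b + 1 - (x + b) = 1 by ring, div_one, show x + b - x = b by ring,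
    div_le_iff₀ hb] at s2
  constructor
  · rw [← Real.log_le_log_iff (by have : 0 < x - 1 := by linarith
                                  positivity) g2,
      Real.log_mul (by have : 0 < x - 1 := by linarith
                       positivity) g1.ne', Real.log_rpow (by linarith)]
    nlinarith
  · rw [← Real.log_le_log_iff g2 (by positivity),
      Real.log_mul (by positivity) g1.ne', Real.log_rpow (by linarith)]
    nlinarith

lemma Gamma_ratio_asymp {b : ℝ} (hb : 0 < b) : ∃ C : ℝ, 0 < C ∧ ∀ x : ℝ, 2 ≤ x →
    |Real.Gamma x / Real.Gamma (x + b) - x ^ (-b)| ≤ C * x ^ (-b) / x := by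
  refine ⟨b ^ 2 + 2 * b * Real.exp b, by positivity, fun x hx => ?_⟩
  have hx0 : 0 < x := by linarith
  obtain ⟨h1, h2⟩ := Gamma_ratio_bounds (show 1 < x by linarith) hb
  have g1 := Real.Gamma_pos_of_pos hx0
  have g2 := Real.Gamma_pos_of_pos (show 0 < x + b by linarith)
  have hP : 0 < x ^ (-b) := by positivity
  have hxm : 0 < x - 1 := by linarith
  have u1 : Real.Gamma x / Real.Gamma (x + b) ≤ (x - 1) ^ (-b) := by
    rw [Real.rpow_neg hxm.le, div_le_iff₀ g2, ← div_eq_inv_mul, le_div_iff₀ (by positivity)]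
    linarith
  have l1 : (x + b) ^ (-b) ≤ Real.Gamma x / Real.Gamma (x + b) := by
    rw [Real.rpow_neg (by positivity), le_div_iff₀ g2, ← div_eq_inv_mul,
      div_le_iff₀ (by positivity)]
    linarith
  have u2 : (x - 1) ^ (-b) ≤ x ^ (-b) * (1 + 2 * b * Real.exp b / x) := by
    have e1 : (x - 1) ^ (-b) = x ^ (-b) * (x / (x - 1)) ^ b := by
      rw [Real.div_rpow hx0.le hxm.le, Real.rpow_neg hxm.le, Real.rpow_neg hx0.le]
      have : x ^ b ≠ 0 := by positivity
      field_simp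
    rw [e1]
    refine mul_le_mul_of_nonneg_left ?_ hP.le
    set w := 2 * b / x with hw
    have hw0 : 0 ≤ w := by positivity
    have hwb : w ≤ b := by rw [hw, div_le_iff₀ hx0]; nlinarith
    have e2 : (x / (x - 1)) ^ b ≤ Real.exp w := by
      rw [Real.rpow_def_of_pos (by positivity)]
      apply Real.exp_le_exp.mpr
      have h3 := Real.log_le_sub_one_of_pos (show 0 < x / (x - 1) by positivity)
      have h4 : x / (x - 1) - 1 ≤ 2 / x := by
        rw [div_sub_one hxm.ne', div_le_div_iff₀ hxm hx0]; linarith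
      calc Real.log (x / (x - 1)) * b ≤ 2 / x * b :=
            mul_le_mul_of_nonneg_right (h3.trans h4) hb.le
        _ = w := by rw [hw]; ring
    have e3 : Real.exp w ≤ 1 + w * Real.exp w := by
      have h5 := Real.add_one_le_exp (-w)
      have h6 : Real.exp (-w) * Real.exp w = 1 := by rw [← Real.exp_add]; simp
      nlinarith [Real.exp_pos w]
    have e4 : Real.exp w ≤ Real.exp b := Real.exp_le_exp.mpr hwb
    have e5 : w * Real.exp w ≤ w * Real.exp b := mul_le_mul_of_nonneg_left e4 hw0
    calc _ ≤ 1 + w * Real.exp b := by linarith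
      _ = _ := by rw [hw]; ring
  have l2 : x ^ (-b) * (1 - b ^ 2 / x) ≤ (x + b) ^ (-b) := by
    have e1 : (x + b) ^ (-b) = x ^ (-b) * ((x + b) / x) ^ (-b) := by
      rw [← Real.mul_rpow hx0.le (by positivity)]
      congr 1
      field_simp
    rw [e1]
    refine mul_le_mul_of_nonneg_left ?_ hP.le
    rw [Real.rpow_def_of_pos (by positivity)]
    have h3 := Real.log_le_sub_one_of_pos (show 0 < (x + b) / x by positivity)
    have h4 : (x + b) / x - 1 = b / x := by field_simp; ring
    have h5 := Real.add_one_le_exp (Real.log ((x + b) / x) * -b)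
    have h6 : Real.log ((x + b) / x) * b ≤ b / x * b :=
      mul_le_mul_of_nonneg_right (by linarith) hb.le
    have h7 : b / x * b = b ^ 2 / x := by ring
    linarith
  have k1 : 0 ≤ x ^ (-b) * (b ^ 2 / x) := by positivity
  have k2 : 0 ≤ x ^ (-b) * (2 * b * Real.exp b / x) := by positivity
  have k3 : (b ^ 2 + 2 * b * Real.exp b) * x ^ (-b) / x =
    x ^ (-b) * (b ^ 2 / x) + x ^ (-b) * (2 * b * Real.exp b / x) := by ring
  rw [k3, abs_le]
  constructor <;> linarith

lemma beta_integral (m : ℕ) {b : ℝ} (hb : 0 < b) :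
    IntegrableOn (fun t : ℝ => t ^ m * (1 - t) ^ (b - 1)) (Ioo 0 1) ∧
    ∫ t in Ioo (0 : ℝ) 1, t ^ m * (1 - t) ^ (b - 1) =
      Real.Gamma b * (Real.Gamma (m + 1) / Real.Gamma (m + 1 + b)) := by
  have hm : (0 : ℝ) < m + 1 := by positivity
  have hconv := Complex.betaIntegral_convergent (u := ((m + 1 : ℝ) : ℂ)) (v := (b : ℂ))
    (by simpa using hm) (by simpa using hb)
  have hcongr : ∀ t ∈ Ioo (0 : ℝ) 1,
      (t : ℂ) ^ (((m + 1 : ℝ) : ℂ) - 1) * (1 - (t : ℂ)) ^ ((b : ℂ) - 1) =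
      ((t ^ m * (1 - t) ^ (b - 1) : ℝ) : ℂ) := by
    intro t ht
    have h1 : (((m + 1 : ℝ) : ℂ) - 1) = (m : ℂ) := by push_cast; ring
    rw [h1, Complex.cpow_natCast]
    push_cast [Complex.ofReal_cpow (show (0 : ℝ) ≤ 1 - t by linarith [ht.2])]
    rfl
  rw [intervalIntegrable_iff_integrableOn_Ioo_of_le zero_le_one] at hconv
  have hI := hconv.congr_fun hcongr measurableSet_Ioo
  refine ⟨?_, ?_⟩
  · exact hI.re
  · have h2 := ProbabilityTheory.beta_eq_betaIntegralReal (m + 1) b hm hb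
    unfold Complex.betaIntegral at h2
    rw [intervalIntegral.integral_of_le zero_le_one, integral_Ioc_eq_integral_Ioo,
      setIntegral_congr_fun measurableSet_Ioo hcongr, integral_complex_ofReal,
      Complex.ofReal_re] at h2
    rw [← h2]
    unfold ProbabilityTheory.beta
    ring

/-! ### The half-normal distribution and its tail -/

/-- The normalising constant `√(2 / π)` of the half-normal density. -/
noncomputable def kap : ℝ := Real.sqrt (2 / Real.pi)

/-- The density of the absolute value of a standard Gaussian. -/
noncomputable def dens (x : ℝ) : ℝ := kap * Real.exp (-x ^ 2 / 2)

/-- The distribution function of the absolute value of a standard Gaussian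
(meaningful for nonnegative arguments). -/
noncomputable def cdf (x : ℝ) : ℝ := kap * ∫ t in (0 : ℝ)..x, Real.exp (-t ^ 2 / 2)

/-- The tail `1 - cdf`. -/
noncomputable def tail (x : ℝ) : ℝ := 1 - cdf x

lemma kap_pos : 0 < kap := Real.sqrt_pos.mpr (by positivity)

lemma dens_pos (x : ℝ) : 0 < dens x := mul_pos kap_pos (Real.exp_pos _)

lemma continuous_gauss : Continuous fun t : ℝ => Real.exp (-t ^ 2 / 2) := by fun_prop

lemma hasDerivAt_cdf (x : ℝ) : HasDerivAt cdf (dens x) x :=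
  (intervalIntegral.integral_hasDerivAt_right (continuous_gauss.intervalIntegrable 0 x)
    (continuous_gauss.stronglyMeasurableAtFilter _ _) continuous_gauss.continuousAt).const_mul kap

lemma continuous_cdf : Continuous cdf :=
  continuous_iff_continuousAt.mpr fun x => (hasDerivAt_cdf x).continuousAt

lemma hasDerivAt_tail (x : ℝ) : HasDerivAt tail (-dens x) x :=
  (hasDerivAt_cdf x).const_sub 1

lemma cdf_zero : cdf 0 = 0 := by simp [cdf]

lemma strictMono_cdf : StrictMono cdf :=
  strictMono_of_hasDerivAt_pos hasDerivAt_cdf dens_pos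

lemma tendsto_cdf : Tendsto cdf atTop (𝓝 1) := by
  have hint : IntegrableOn (fun t : ℝ => Real.exp (-t ^ 2 / 2)) (Ioi 0) := by
    have := (integrable_exp_neg_mul_sq (b := 1 / 2) (by norm_num)).integrableOn (s := Ioi 0)
    refine this.congr_fun (fun t _ => ?_) measurableSet_Ioi
    ring_nf
  have h := (intervalIntegral_tendsto_integral_Ioi 0 hint tendsto_id).const_mul kap
  have hv : kap * ∫ t in Ioi (0 : ℝ), Real.exp (-t ^ 2 / 2) = 1 := by
    have h1 := integral_gaussian_Ioi (1 / 2)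
    have h2 : ∫ t in Ioi (0 : ℝ), Real.exp (-t ^ 2 / 2) = √(Real.pi / (1 / 2)) / 2 := by
      rw [← h1]
      congr 1
      ext t
      ring_nf
    rw [h2, kap, ← mul_div_assoc, ← Real.sqrt_mul (by positivity)]
    have h3 : 2 / Real.pi * (Real.pi / (1 / 2)) = 2 ^ 2 := by
      field_simp
    rw [h3, Real.sqrt_sq (by norm_num)]
    norm_num
  rw [hv] at h
  exact h

lemma cdf_pos {x : ℝ} (hx : 0 < x) : 0 < cdf x := by
  have := strictMono_cdf hx
  rwa [cdf_zero] at this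

lemma tendsto_tail : Tendsto tail atTop (𝓝 0) := by
  have h := tendsto_cdf.const_sub 1
  rw [sub_self] at h
  exact h

/-- A function on `(0, ∞)` with nonpositive derivative and limit `0` is nonnegative. -/
lemma nonneg_of_deriv_nonpos {f f' : ℝ → ℝ} (hf : ∀ x, 0 < x → HasDerivAt f (f' x) x)
    (hf' : ∀ x, 0 < x → f' x ≤ 0) (hlim : Tendsto f atTop (𝓝 0)) {x : ℝ} (hx : 0 < x) :
    0 ≤ f x := by
  have hanti : AntitoneOn f (Ioi 0) := by
    apply antitoneOn_of_deriv_nonpos (convex_Ioi 0)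
    · exact fun y hy => (hf y hy).continuousAt.continuousWithinAt
    · intro y hy
      rw [interior_Ioi] at hy
      exact (hf y hy).differentiableAt.differentiableWithinAt
    · intro y hy
      rw [interior_Ioi] at hy
      rw [(hf y hy).deriv]
      exact hf' y hy
  refine le_of_tendsto hlim ?_
  filter_upwards [eventually_ge_atTop x] with y hy
  exact hanti hx (hx.trans_le hy) hy

lemma hasDerivAt_dens (x : ℝ) : HasDerivAt dens (-x * dens x) x := by
  have h := ((((hasDerivAt_id x).pow 2).neg.div_const 2).exp).const_mul kap
  refine h.congr_deriv ?_
  simp [dens]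
  ring

lemma tendsto_dens : Tendsto dens atTop (𝓝 0) := by
  have h : Tendsto (fun x : ℝ => Real.exp (-x ^ 2 / 2)) atTop (𝓝 0) := by
    apply Real.tendsto_exp_atBot.comp
    have h1 : Tendsto (fun x : ℝ => x ^ 2 / 2) atTop atTop :=
      (tendsto_pow_atTop (by norm_num)).atTop_div_const (by norm_num)
    refine (tendsto_neg_atTop_atBot.comp h1).congr fun x => ?_
    simp only [Function.comp_apply]; ring
  have h1 := h.const_mul kap
  rw [mul_zero] at h1
  exact h1

lemma hasDerivAt_dens_div {g : ℝ → ℝ} {g' x : ℝ} (hg : HasDerivAt g g' x) (h0 : 0 < g x) :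
    HasDerivAt (fun y => dens y / g y) (-(dens x * (x * g x + g') / g x ^ 2)) x := by
  refine ((hasDerivAt_dens x).div hg h0.ne').congr_deriv ?_
  field_simp
  ring

lemma tendsto_dens_div {g : ℝ → ℝ} (c : ℝ) (hc : 0 < c) (hg : ∀ x, 1 ≤ x → c ≤ g x) :
    Tendsto (fun y => dens y / g y) atTop (𝓝 0) := by
  have h : Tendsto (fun y => dens y / c) atTop (𝓝 0) := by
    simpa using tendsto_dens.div_const c
  refine squeeze_zero' ?_ ?_ h
  · filter_upwards [eventually_ge_atTop 1] with y hy
    exact div_nonneg (dens_pos y).le (hc.le.trans (hg y hy))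
  · filter_upwards [eventually_ge_atTop 1] with y hy
    exact div_le_div_of_nonneg_left (dens_pos y).le hc (hg y hy)

/-- Lower bound `dens / g` for the tail: both sides vanish at infinity, and the hypothesis `h` says
that `dens / g` decreases no faster than the tail. -/
lemma tail_ge_of {g g' : ℝ → ℝ} (c : ℝ) (hc : 0 < c) (hgc : ∀ x, 1 ≤ x → c ≤ g x)
    (h0 : ∀ x, 0 < x → 0 < g x) (hg : ∀ x, 0 < x → HasDerivAt g (g' x) x)
    (h : ∀ x, 0 < x → x * g x + g' x ≤ g x ^ 2) {x : ℝ} (hx : 0 < x) :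
    dens x / g x ≤ tail x := by
  have := nonneg_of_deriv_nonpos (f := fun y => tail y - dens y / g y)
    (fun y hy => (hasDerivAt_tail y).sub (hasDerivAt_dens_div (hg y hy) (h0 y hy)))
    (fun y hy => ?_) (by simpa using tendsto_tail.sub (tendsto_dens_div c hc hgc)) hx
  · simpa using this
  · have h1 : dens y * (y * g y + g' y) / g y ^ 2 ≤ dens y := by
      rw [div_le_iff₀ (pow_pos (h0 y hy) 2)]
      exact mul_le_mul_of_nonneg_left (h y hy) (dens_pos y).le
    linarith

/-- Upper bound `dens / g` for the tail, by the reversed differential inequality. -/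
lemma tail_le_of {g g' : ℝ → ℝ} (c : ℝ) (hc : 0 < c) (hgc : ∀ x, 1 ≤ x → c ≤ g x)
    (h0 : ∀ x, 0 < x → 0 < g x) (hg : ∀ x, 0 < x → HasDerivAt g (g' x) x)
    (h : ∀ x, 0 < x → g x ^ 2 ≤ x * g x + g' x) {x : ℝ} (hx : 0 < x) :
    tail x ≤ dens x / g x := by
  have := nonneg_of_deriv_nonpos (f := fun y => dens y / g y - tail y)
    (fun y hy => (hasDerivAt_dens_div (hg y hy) (h0 y hy)).sub (hasDerivAt_tail y))
    (fun y hy => ?_) (by simpa using (tendsto_dens_div c hc hgc).sub tendsto_tail) hx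
  · simpa using this
  · have h1 : dens y ≤ dens y * (y * g y + g' y) / g y ^ 2 := by
      rw [le_div_iff₀ (pow_pos (h0 y hy) 2)]
      exact mul_le_mul_of_nonneg_left (h y hy) (dens_pos y).le
    linarith

lemma tail_le_dens_div_self {x : ℝ} (hx : 0 < x) : tail x ≤ dens x / x :=
  tail_le_of (g := fun x => x) (g' := fun _ => 1) 1 one_pos (fun _ h => h) (fun _ h => h)
    (fun x _ => hasDerivAt_id x) (fun x _ => by nlinarith) hx

lemma tail_le_two_mul {x : ℝ} (hx : 0 < x) : tail x ≤ dens x / ((x + 1) / 2) :=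
  tail_le_of (g := fun x => (x + 1) / 2) (g' := fun _ => 1 / 2) 1 one_pos
    (fun _ h => by linarith) (fun _ h => by linarith)
    (fun x _ => ((hasDerivAt_id x).add_const 1).div_const 2) (fun x _ => by nlinarith) hx

lemma tail_ge_dens_div_sqrt {x : ℝ} (hx : 0 < x) : dens x / √(x ^ 2 + 2) ≤ tail x := by
  refine tail_ge_of (g := fun x => √(x ^ 2 + 2)) (g' := fun x => x / √(x ^ 2 + 2)) 1 one_pos
    (fun x h => Real.le_sqrt_of_sq_le (by nlinarith)) (fun x h => Real.sqrt_pos.mpr (by positivity))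
    (fun x _ => ?_) (fun x hx => ?_) hx
  · refine ((((hasDerivAt_id x).pow 2).add_const 2).sqrt
      (by change x ^ 2 + 2 ≠ 0; positivity)).congr_deriv ?_
    simp
    ring
  · have hv : 0 < √(x ^ 2 + 2) := Real.sqrt_pos.mpr (by positivity)
    have hv2 : √(x ^ 2 + 2) ^ 2 = x ^ 2 + 2 := Real.sq_sqrt (by positivity)
    set v := √(x ^ 2 + 2)
    rw [← sub_nonneg]
    -- `x (v² + 1) ≤ v³`, checked on squares: `v⁶ - x² (v² + 1)² = 3 x² + 8`
    have key : x * (v ^ 2 + 1) ≤ v ^ 3 := by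
      apply le_of_sq_le_sq _ (by positivity)
      have e1 : (v ^ 3) ^ 2 = (x ^ 2 + 2) ^ 3 := by rw [← hv2]; ring
      rw [e1, hv2]
      nlinarith [sq_nonneg x]
    have e2 : v ^ 2 - (x * v + x / v) = (v ^ 3 - x * (v ^ 2 + 1)) / v := by
      field_simp
    rw [e2]
    exact div_nonneg (by linarith) hv.le

lemma tail_pos {x : ℝ} (hx : 0 < x) : 0 < tail x :=
  (div_pos (dens_pos x) (Real.sqrt_pos.mpr (by positivity))).trans_le (tail_ge_dens_div_sqrt hx)

/-- The normalised Mills ratio `√(x ^ 2 + 2) * tail / dens`. -/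
noncomputable def mills (x : ℝ) : ℝ := tail x * √(x ^ 2 + 2) / dens x

lemma one_le_mills {x : ℝ} (hx : 0 < x) : 1 ≤ mills x := by
  have hv : 0 < √(x ^ 2 + 2) := Real.sqrt_pos.mpr (by positivity)
  have := tail_ge_dens_div_sqrt hx
  rw [div_le_iff₀ hv] at this
  rwa [mills, one_le_div (dens_pos x)]

/-- The bounds `dens / x` and `2 * dens / (x + 1)` for the tail are used on `[1, ∞)` and `(0, 1]`
respectively. -/
lemma mills_le {x : ℝ} (hx : 0 < x) : mills x ≤ 1 + 3 / (1 + x ^ 2 / 2) := by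
  have hv : 0 < √(x ^ 2 + 2) := Real.sqrt_pos.mpr (by positivity)
  have hv2 : √(x ^ 2 + 2) ^ 2 = x ^ 2 + 2 := Real.sq_sqrt (by positivity)
  have hd := dens_pos x
  set v := √(x ^ 2 + 2) with hvd
  have hY : 0 < 1 + x ^ 2 / 2 := by positivity
  rcases le_total x 1 with h | h
  · have h1 := tail_le_two_mul hx
    rw [le_div_iff₀ (by positivity)] at h1
    have h2 : 2 * v ≤ 3 * (x + 1) := by
      apply le_of_sq_le_sq _ (by positivity)
      rw [mul_pow, hv2]
      nlinarith
    have h3 : mills x ≤ 3 := by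
      rw [mills, div_le_iff₀ hd]
      nlinarith [tail_pos hx]
    have h4 : 2 ≤ 3 / (1 + x ^ 2 / 2) := by
      rw [le_div_iff₀ hY]; nlinarith
    linarith
  · have h1 := tail_le_dens_div_self hx
    rw [le_div_iff₀ hx] at h1
    have h2 : v ≤ x + 1 / x := by
      apply le_of_sq_le_sq _ (by positivity)
      rw [hv2]
      have : (x + 1 / x) ^ 2 = x ^ 2 + 2 + (1 / x) ^ 2 := by field_simp; ring
      rw [this]
      nlinarith [sq_nonneg (1 / x)]
    have h3 : mills x ≤ 1 + 1 / x ^ 2 := by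
      rw [mills, div_le_iff₀ hd]
      have e1 : tail x * v ≤ tail x * (x + 1 / x) :=
        mul_le_mul_of_nonneg_left h2 (tail_pos hx).le
      have e2 : tail x * (x + 1 / x) = (tail x * x) * (1 + 1 / x ^ 2) := by
        field_simp
      have e3 : (tail x * x) * (1 + 1 / x ^ 2) ≤ dens x * (1 + 1 / x ^ 2) :=
        mul_le_mul_of_nonneg_right h1 (by positivity)
      linarith
    have h4 : 1 / x ^ 2 ≤ 3 / (1 + x ^ 2 / 2) := by
      rw [div_le_div_iff₀ (by positivity) hY]; nlinarith
    linarith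

/-! ### Pointwise comparison of the integrand with a Beta weight -/

lemma log_dens (x : ℝ) : Real.log (dens x) = Real.log kap - x ^ 2 / 2 := by
  rw [dens, Real.log_mul kap_pos.ne' (Real.exp_pos _).ne', Real.log_exp]
  ring

lemma log_mills {x : ℝ} (hx : 0 < x) :
    Real.log (mills x) =
      Real.log (tail x) + Real.log (2 * (1 + x ^ 2 / 2)) / 2 - Real.log (dens x) := by
  have hv : 0 < √(x ^ 2 + 2) := Real.sqrt_pos.mpr (by positivity)
  have ht := tail_pos hx
  have hd := dens_pos x
  rw [mills, Real.log_div (by positivity) hd.ne', Real.log_mul ht.ne' hv.ne',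
    Real.log_sqrt (by positivity)]
  ring_nf

/-- Up to a bounded error, `-log (tail x)` is `y + log y / 2` with `y = 1 + x ^ 2 / 2`. -/
lemma log_tail_bound : ∃ C : ℝ, 0 < C ∧ ∀ x : ℝ, 0 < x →
    |(1 + x ^ 2 / 2) + Real.log (1 + x ^ 2 / 2) / 2 + Real.log (tail x)| ≤ C := by
  refine ⟨3 + 1 + |Real.log kap| + |Real.log 2|, by positivity, fun x hx => ?_⟩
  have hY : 0 < 1 + x ^ 2 / 2 := by positivity
  have h1 := log_mills hx
  rw [log_dens, Real.log_mul (by norm_num) hY.ne'] at h1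
  have h2 := one_le_mills hx
  have h3 := mills_le hx
  have h4 : 3 / (1 + x ^ 2 / 2) ≤ 3 := by
    rw [div_le_iff₀ hY]; nlinarith [sq_nonneg x]
  have h5 := Real.log_nonneg h2
  have h6 := Real.log_le_sub_one_of_pos (show 0 < mills x by linarith)
  rw [abs_le]
  constructor <;>
  linarith [neg_abs_le (Real.log kap), le_abs_self (Real.log kap), neg_abs_le (Real.log 2),
    le_abs_self (Real.log 2)]

/-- The relative error made in replacing `x ^ 2 / 2` by `y = 1 + x ^ 2 / 2` and the normalised Mills
ratio by `1`. -/
lemma factor_bound (p b : ℝ) (hp : 0 ≤ p) : ∃ C : ℝ, 0 < C ∧ ∀ y ρ : ℝ, 1 < y → 1 ≤ ρ →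
    ρ ≤ 1 + 3 / y → |(1 - 1 / y) ^ p * ρ ^ b - 1| ≤ C / y := by
  refine ⟨3 * |b| * 4 ^ |b - 1| + (p + 1), by positivity, fun y ρ hy h1 h2 => ?_⟩
  have hy0 : 0 < y := by linarith
  have hz : 1 / y < 1 := by rw [div_lt_one hy0]; exact hy
  have hz0 : 0 < 1 / y := by positivity
  have h3 : 3 / y = 3 * (1 / y) := by ring
  have hu1 : (1 - 1 / y) ^ p ≤ 1 := Real.rpow_le_one (by linarith) (by linarith) hp
  have hu0 : 0 ≤ (1 - 1 / y) ^ p := Real.rpow_nonneg (by linarith) _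
  have hu2 : 1 - (p + 1) * (1 / y) ≤ (1 - 1 / y) ^ p := by
    have e1 := one_add_mul_self_le_rpow_one_add (s := -(1 / y)) (by linarith)
      (p := p + 1) (by linarith)
    have e2 := Real.rpow_le_rpow_of_exponent_ge (show 0 < 1 - 1 / y by linarith) (by linarith)
      (show p ≤ p + 1 by linarith)
    rw [← sub_eq_add_neg] at e1
    linarith
  have hv : |ρ ^ b - 1| ≤ 3 * |b| * 4 ^ |b - 1| * (1 / y) := by
    have e1 := abs_rpow_sub_rpow_le h1 le_rfl b
    rw [Real.one_rpow, Real.one_rpow, mul_one] at e1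
    have e2 : |ρ - 1| ≤ 3 * (1 / y) := by rw [abs_of_nonneg (by linarith)]; linarith
    have e3 : (1 + |ρ - 1|) ^ |b - 1| ≤ 4 ^ |b - 1| :=
      Real.rpow_le_rpow (by positivity) (by linarith) (abs_nonneg _)
    calc _ ≤ _ := e1
      _ ≤ |b| * 4 ^ |b - 1| * (3 * (1 / y)) := by gcongr
      _ = _ := by ring
  have hsplit : (1 - 1 / y) ^ p * ρ ^ b - 1 =
      (1 - 1 / y) ^ p * (ρ ^ b - 1) + ((1 - 1 / y) ^ p - 1) := by ring
  rw [hsplit]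
  refine (abs_add_le _ _).trans ?_
  rw [abs_mul, abs_of_nonneg hu0, abs_of_nonpos (show (1 - 1 / y) ^ p - 1 ≤ 0 by linarith)]
  have e4 : (1 - 1 / y) ^ p * |ρ ^ b - 1| ≤ |ρ ^ b - 1| :=
    mul_le_of_le_one_left (abs_nonneg _) hu1
  have e5 : (3 * |b| * 4 ^ |b - 1| + (p + 1)) / y =
    3 * |b| * 4 ^ |b - 1| * (1 / y) + (p + 1) * (1 / y) := by ring
  rw [e5]
  linarith

/-- The constant relating the integrand to the weight `tail ^ (a - 1) * dens`. -/
noncomputable def ampl (a r : ℝ) : ℝ := kap ^ (-a) * 2 ^ r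

lemma ampl_pos (a r : ℝ) : 0 < ampl a r :=
  mul_pos (Real.rpow_pos_of_pos kap_pos _) (by positivity)

lemma integrand_eq (n : ℕ) (hn : 1 ≤ n) (a r : ℝ) (hr : r = ((n : ℝ) + a - 2) / 2) {x : ℝ}
    (hx : 0 < x) :
    x ^ (n - 1) * Real.exp (-a * x ^ 2 / 2) =
      ampl a r * (1 + x ^ 2 / 2) ^ r *
        ((1 - 1 / (1 + x ^ 2 / 2)) ^ (((n : ℝ) - 1) / 2) * mills x ^ (1 - a)) *
        (tail x ^ (a - 1) * dens x) := by
  have hY : 0 < 1 + x ^ 2 / 2 := by positivity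
  have h1 : 1 - 1 / (1 + x ^ 2 / 2) = x ^ 2 / (2 * (1 + x ^ 2 / 2)) := by
    field_simp; ring
  have hu : 0 < 1 - 1 / (1 + x ^ 2 / 2) := by rw [h1]; positivity
  have hm : 0 < mills x := by linarith [one_le_mills hx]
  have ht := tail_pos hx
  have hd := dens_pos x
  have hk := kap_pos
  have ha := ampl_pos a r
  have p1 := Real.rpow_pos_of_pos hY r
  have p2 := Real.rpow_pos_of_pos hu (((n : ℝ) - 1) / 2)
  have p3 := Real.rpow_pos_of_pos hm (1 - a)
  have p4 := Real.rpow_pos_of_pos ht (a - 1)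
  have p5 := Real.rpow_pos_of_pos hk (-a)
  have p6 : (0 : ℝ) < 2 ^ r := by positivity
  -- both sides are positive products, so the identity is a linear one between logarithms
  apply Real.log_injOn_pos (mem_Ioi.mpr (by positivity)) (mem_Ioi.mpr (by positivity))
  have hl := log_mills hx
  have hlu : Real.log (1 - 1 / (1 + x ^ 2 / 2)) =
      2 * Real.log x - (Real.log 2 + Real.log (1 + x ^ 2 / 2)) := by
    rw [h1, Real.log_div (by positivity) (by positivity), Real.log_pow,
      Real.log_mul (by norm_num) hY.ne']
    norm_num
  rw [log_dens, Real.log_mul two_ne_zero hY.ne'] at hl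
  rw [Real.log_mul (by positivity) (by positivity), Real.log_mul (by positivity) (by positivity),
    Real.log_mul (by positivity) (by positivity), Real.log_mul (by positivity) (by positivity),
    Real.log_mul p2.ne' p3.ne', Real.log_mul p4.ne' hd.ne', ampl, Real.log_mul p5.ne' p6.ne',
    Real.log_pow, Real.log_exp, Real.log_rpow hk, Real.log_rpow two_pos, Real.log_rpow hY,
    Real.log_rpow hu, Real.log_rpow hm, Real.log_rpow ht, hlu, hl, log_dens, hr,
    Nat.cast_sub hn]
  push_cast
  ring

/-- The key pointwise estimate. Write `u = tail x * M`. For `u` of order one the integrand is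
`mainTerm r (log M)` times the weight `tail ^ (a - 1) * dens`, and away from this region the error
grows at most like a small power of `u` or `u⁻¹`. -/
lemma integrand_bound (n : ℕ) (hn : 1 ≤ n) (a r δ : ℝ) (hδ : 0 < δ)
    (hr : r = ((n : ℝ) + a - 2) / 2) :
    ∃ C : ℝ, 0 < C ∧ ∀ x M : ℝ, 0 < x → 0 < M → 1 ≤ Real.log M →
      |x ^ (n - 1) * Real.exp (-a * x ^ 2 / 2) -
        ampl a r * mainTerm r (Real.log M) * (tail x ^ (a - 1) * dens x)| ≤
      C * Real.log M ^ (r - 1) * ((tail x ^ (a - 1) * dens x) *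
        ((tail x * M) ^ δ + (tail x * M) ^ (-δ))) := by
  obtain ⟨C1, hC1, h1⟩ := log_tail_bound
  have hp : 0 ≤ ((n : ℝ) - 1) / 2 := by
    have : (1 : ℝ) ≤ n := by exact_mod_cast hn
    linarith
  obtain ⟨C2, hC2, h2⟩ := factor_bound (((n : ℝ) - 1) / 2) (1 - a) hp
  obtain ⟨C3, hC3, h3⟩ := approxInv_rpow r
  set k := |r - 1| + 1 with hk
  have hk0 : 0 ≤ k := by positivity
  obtain ⟨C4, hC4, h4⟩ := one_add_rpow_le_exp k δ hk0 hδ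
  have hA := ampl_pos a r
  set B := ampl a r * (C2 * 2 ^ |r - 1| + |r| * 2 ^ |r - 1| + C3) with hB
  have hB0 : 0 < B := by positivity
  refine ⟨B * (C4 * Real.exp (δ * (C1 + 1))), by positivity, fun x M hx hM hl => ?_⟩
  set l := Real.log M with hldef
  set y := 1 + x ^ 2 / 2 with hy
  set W := tail x ^ (a - 1) * dens x with hW
  set z := approxInv l with hz
  have ht := tail_pos hx
  have hW0 : 0 < W := mul_pos (Real.rpow_pos_of_pos ht _) (dens_pos x)
  have hy1 : 1 < y := by rw [hy]; have : 0 < x ^ 2 := by positivity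
                         linarith
  have hy0 : 0 < y := by linarith
  have hz1 : 1 ≤ z := by linarith [half_le_approxInv hl]
  have hl0 : 0 < l := by linarith
  set E := (1 - 1 / y) ^ (((n : ℝ) - 1) / 2) * mills x ^ (1 - a) with hE
  have hEb : |E - 1| ≤ C2 / y := h2 y (mills x) hy1 (one_le_mills hx) (mills_le hx)
  have hg : x ^ (n - 1) * Real.exp (-a * x ^ 2 / 2) = ampl a r * y ^ r * E * W :=
    integrand_eq n hn a r hr hx
  set D := |y - z| with hD
  have hD0 : 0 ≤ D := abs_nonneg _
  have hlr : 0 < l ^ (r - 1) := by positivity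
  have hyr : y ^ r = y ^ (r - 1) * y := by
    rw [← Real.rpow_add_one hy0.ne']; congr 1; ring
  have hzr := approxInv_rpow_le hl (r - 1)
  have hpow : (1 + D) ^ k = (1 + D) ^ |r - 1| * (1 + D) := by
    rw [hk, Real.rpow_add_one (by positivity)]
  have hpow1 : 1 ≤ (1 + D) ^ k := Real.one_le_rpow (by linarith) hk0
  have hpow0 : 0 < (1 + D) ^ |r - 1| := by positivity
  have t1 : |y ^ r * E - y ^ r| ≤ C2 * 2 ^ |r - 1| * (l ^ (r - 1) * (1 + D) ^ k) := by
    have e1 : y ^ r * E - y ^ r = y ^ r * (E - 1) := by ring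
    rw [e1, abs_mul, abs_of_pos (by positivity)]
    calc y ^ r * |E - 1| ≤ y ^ r * (C2 / y) := by gcongr
      _ = C2 * y ^ (r - 1) := by rw [hyr]; field_simp
      _ ≤ C2 * (z ^ (r - 1) * (1 + D) ^ |r - 1|) := by
          gcongr; exact peetre hy1.le hz1 _
      _ ≤ C2 * ((2 ^ |r - 1| * l ^ (r - 1)) * (1 + D) ^ k) := by
          gcongr
          · linarith
          · linarith
      _ = _ := by ring
  have t2 : |y ^ r - z ^ r| ≤ |r| * 2 ^ |r - 1| * (l ^ (r - 1) * (1 + D) ^ k) := by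
    calc |y ^ r - z ^ r| ≤ |r| * z ^ (r - 1) * (1 + D) ^ |r - 1| * D :=
          abs_rpow_sub_rpow_le hy1.le hz1 r
      _ ≤ |r| * (2 ^ |r - 1| * l ^ (r - 1)) * (1 + D) ^ |r - 1| * (1 + D) := by
          gcongr; linarith
      _ = _ := by rw [hpow]; ring
  have t3 : |z ^ r - mainTerm r l| ≤ C3 * (l ^ (r - 1) * (1 + D) ^ k) := by
    refine (h3 l hl).trans (mul_le_mul_of_nonneg_left ?_ hC3.le)
    exact le_mul_of_one_le_right hlr.le hpow1
  have t4 : |y ^ r * E - mainTerm r l| ≤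
      (C2 * 2 ^ |r - 1| + |r| * 2 ^ |r - 1| + C3) * (l ^ (r - 1) * (1 + D) ^ k) := by
    have e1 : y ^ r * E - mainTerm r l =
      (y ^ r * E - y ^ r) + (y ^ r - z ^ r) + (z ^ r - mainTerm r l) := by ring
    rw [e1]
    refine (abs_add_three _ _ _).trans ?_
    linarith
  have huM : 0 < tail x * M := by positivity
  have hDb : D ≤ |Real.log (tail x * M)| + (C1 + 1) := by
    have e1 := abs_sub_approxInv_le hy1.le hl
    have e2 : y + Real.log y / 2 - l =
        (y + Real.log y / 2 + Real.log (tail x)) - Real.log (tail x * M) := by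
      rw [Real.log_mul ht.ne' hM.ne']; ring
    rw [e2] at e1
    have e3 := abs_sub (y + Real.log y / 2 + Real.log (tail x)) (Real.log (tail x * M))
    have e4 := h1 x hx
    linarith
  have hexp : Real.exp (δ * |Real.log (tail x * M)|) ≤
      (tail x * M) ^ δ + (tail x * M) ^ (-δ) := by
    rw [Real.rpow_def_of_pos huM, Real.rpow_def_of_pos huM]
    rcases abs_cases (Real.log (tail x * M)) with ⟨h, _⟩ | ⟨h, _⟩ <;> rw [h]
    · rw [mul_comm δ]
      linarith [Real.exp_pos (Real.log (tail x * M) * -δ)]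
    · rw [show δ * -Real.log (tail x * M) = Real.log (tail x * M) * -δ by ring]
      linarith [Real.exp_pos (Real.log (tail x * M) * δ)]
  have t5 : (1 + D) ^ k ≤ C4 * Real.exp (δ * (C1 + 1)) *
      ((tail x * M) ^ δ + (tail x * M) ^ (-δ)) := by
    calc (1 + D) ^ k ≤ C4 * Real.exp (δ * D) := h4 D hD0
      _ ≤ C4 * Real.exp (δ * (|Real.log (tail x * M)| + (C1 + 1))) := by gcongr
      _ = C4 * Real.exp (δ * (C1 + 1)) * Real.exp (δ * |Real.log (tail x * M)|) := by
          rw [mul_add, Real.exp_add]; ring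
      _ ≤ _ := by gcongr
  have e1 : ampl a r * y ^ r * E * W - ampl a r * mainTerm r l * W =
    ampl a r * W * (y ^ r * E - mainTerm r l) := by ring
  rw [hg, e1, abs_mul, abs_of_pos (by positivity)]
  calc ampl a r * W * |y ^ r * E - mainTerm r l|
      ≤ ampl a r * W * ((C2 * 2 ^ |r - 1| + |r| * 2 ^ |r - 1| + C3) *
        (l ^ (r - 1) * (1 + D) ^ k)) := by gcongr
    _ = B * W * l ^ (r - 1) * (1 + D) ^ k := by rw [hB]; ring
    _ ≤ B * W * l ^ (r - 1) * (C4 * Real.exp (δ * (C1 + 1)) *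
      ((tail x * M) ^ δ + (tail x * M) ^ (-δ))) := by gcongr
    _ = _ := by ring

/-! ### Integration and the asymptotics of the integral -/

lemma image_cdf : cdf '' Ioi 0 = Ioo 0 1 := by
  have hlt : ∀ x, 0 < x → cdf x < 1 := fun x hx => by
    have := tail_pos hx
    unfold tail at this
    linarith
  apply Subset.antisymm
  · rintro _ ⟨x, hx, rfl⟩
    exact ⟨cdf_pos hx, hlt x hx⟩
  · intro t ht
    obtain ⟨X, hX⟩ := ((tendsto_cdf.eventually (lt_mem_nhds ht.2)).and
      (eventually_ge_atTop 0)).exists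
    obtain ⟨x, hx, hxt⟩ := intermediate_value_Icc hX.2 continuous_cdf.continuousOn
      (show t ∈ Icc (cdf 0) (cdf X) by rw [cdf_zero]; exact ⟨ht.1.le, hX.1.le⟩)
    refine ⟨x, lt_of_le_of_ne hx.1 ?_, hxt⟩
    rintro rfl
    rw [cdf_zero] at hxt
    exact ht.1.ne hxt

/-- The Beta integral in the variable `t = cdf x`. -/
lemma weight_integral (m : ℕ) {b : ℝ} (hb : 0 < b) :
    IntegrableOn (fun x : ℝ => cdf x ^ m * (tail x ^ (b - 1) * dens x)) (Ioi 0) ∧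
    ∫ x in Ioi (0 : ℝ), cdf x ^ m * (tail x ^ (b - 1) * dens x) =
      Real.Gamma b * (Real.Gamma (m + 1) / Real.Gamma (m + 1 + b)) := by
  obtain ⟨h1, h2⟩ := beta_integral m hb
  have hder : ∀ x ∈ Ioi (0 : ℝ), HasDerivWithinAt cdf (dens x) (Ioi 0) x :=
    fun x _ => (hasDerivAt_cdf x).hasDerivWithinAt
  have hinj : InjOn cdf (Ioi 0) := strictMono_cdf.injective.injOn
  have he : ∀ x, |dens x| • (cdf x ^ m * (1 - cdf x) ^ (b - 1)) =
      cdf x ^ m * (tail x ^ (b - 1) * dens x) := fun x => by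
    rw [abs_of_pos (dens_pos x), smul_eq_mul, tail]; ring
  rw [← image_cdf] at h1 h2
  rw [integrableOn_image_iff_integrableOn_abs_deriv_smul measurableSet_Ioi hder hinj] at h1
  rw [integral_image_eq_integral_abs_deriv_smul measurableSet_Ioi hder hinj] at h2
  simp only [he] at h1 h2
  exact ⟨h1, h2⟩

lemma weight_integral_asymp {b : ℝ} (hb : 0 < b) : ∃ C : ℝ, 0 < C ∧ ∀ m : ℕ, 1 ≤ m →
    |(∫ x in Ioi (0 : ℝ), cdf x ^ m * (tail x ^ (b - 1) * dens x)) -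
      Real.Gamma b * ((m : ℝ) + 1) ^ (-b)| ≤ C * ((m : ℝ) + 1) ^ (-b) / ((m : ℝ) + 1) := by
  obtain ⟨C, hC, h⟩ := Gamma_ratio_asymp hb
  have hG := Real.Gamma_pos_of_pos hb
  refine ⟨Real.Gamma b * C, by positivity, fun m hm => ?_⟩
  have hm' : (2 : ℝ) ≤ m + 1 := by
    have : (1 : ℝ) ≤ m := by exact_mod_cast hm
    linarith
  rw [(weight_integral m hb).2, ← mul_sub, abs_mul, abs_of_pos hG, mul_assoc, mul_div_assoc]
  exact mul_le_mul_of_nonneg_left (h _ hm') hG.le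

lemma weight_integral_le {b : ℝ} (hb : 0 < b) : ∃ C : ℝ, 0 < C ∧ ∀ m : ℕ, 1 ≤ m →
    (∫ x in Ioi (0 : ℝ), cdf x ^ m * (tail x ^ (b - 1) * dens x)) ≤
      C * ((m : ℝ) + 1) ^ (-b) := by
  obtain ⟨C, hC, h⟩ := weight_integral_asymp hb
  have hG := Real.Gamma_pos_of_pos hb
  refine ⟨Real.Gamma b + C, by positivity, fun m hm => ?_⟩
  have hm' : (1 : ℝ) ≤ m + 1 := by linarith [Nat.cast_nonneg (α := ℝ) m]
  have h1 := (abs_le.mp (h m hm)).2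
  have h2 : C * ((m : ℝ) + 1) ^ (-b) / ((m : ℝ) + 1) ≤ C * ((m : ℝ) + 1) ^ (-b) :=
    div_le_self (by positivity) hm'
  linarith

/-- Integrating `integrand_bound` against `cdf ^ m`: the factors `(tail x * M) ^ (± δ)` only shift the
parameter of the Beta weight. -/
lemma integral_asymp (n : ℕ) (hn : 1 ≤ n) (a r : ℝ) (ha : 0 < a)
    (hr : r = ((n : ℝ) + a - 2) / 2) :
    ∃ C : ℝ, 0 < C ∧ ∀ m : ℕ, 1 ≤ m → 1 ≤ Real.log ((m : ℝ) + 1) →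
      |(∫ x in Ioi (0 : ℝ), cdf x ^ m * (x ^ (n - 1) * Real.exp (-a * x ^ 2 / 2))) -
        ampl a r * Real.Gamma a * ((m : ℝ) + 1) ^ (-a) * mainTerm r (Real.log ((m : ℝ) + 1))| ≤
      C * (((m : ℝ) + 1) ^ (-a) * Real.log ((m : ℝ) + 1) ^ (r - 1)) := by
  set δ := a / 2 with hδ
  have hδ0 : 0 < δ := by positivity
  obtain ⟨C1, hC1, h1⟩ := integrand_bound n hn a r δ hδ0 hr
  obtain ⟨C2, hC2, h2⟩ := weight_integral_le (show 0 < a + δ by positivity)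
  obtain ⟨C3, hC3, h3⟩ := weight_integral_le (show 0 < a - δ by rw [hδ]; linarith)
  obtain ⟨C4, hC4, h4⟩ := weight_integral_asymp ha
  have hA := ampl_pos a r
  refine ⟨C1 * (C2 + C3) + ampl a r * (1 + |r|) * C4, by positivity, fun m hm hl => ?_⟩
  set M : ℝ := (m : ℝ) + 1 with hM
  set l := Real.log M with hldef
  have hM0 : 0 < M := by positivity
  have hl0 : 0 < l := by linarith
  have hlr : 0 < l ^ (r - 1) := by positivity
  set w : ℝ → ℝ → ℝ := fun b x => cdf x ^ m * (tail x ^ (b - 1) * dens x) with hw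
  set g : ℝ → ℝ := fun x => cdf x ^ m * (x ^ (n - 1) * Real.exp (-a * x ^ 2 / 2)) with hg
  set G := ampl a r * mainTerm r l with hG
  have i1 : IntegrableOn (w a) (Ioi 0) := (weight_integral m ha).1
  have i2 : IntegrableOn (w (a + δ)) (Ioi 0) := (weight_integral m (by positivity)).1
  have i3 : IntegrableOn (w (a - δ)) (Ioi 0) :=
    (weight_integral m (by rw [hδ]; linarith)).1
  have ig : IntegrableOn g (Ioi 0) := by
    have e1 : IntegrableOn (fun x : ℝ => x ^ ((n - 1 : ℕ) : ℝ) * Real.exp (-(a / 2) * x ^ 2))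
        (Ioi 0) :=
      integrableOn_rpow_mul_exp_neg_mul_sq (by positivity)
        (by linarith [Nat.cast_nonneg (α := ℝ) (n - 1)])
    refine Integrable.mono' e1 ?_ ?_
    · have hc := continuous_cdf
      exact Continuous.aestronglyMeasurable (by rw [hg]; fun_prop)
    · refine (ae_restrict_iff' measurableSet_Ioi).mpr (ae_of_all _ fun x hx => ?_)
      have hx0 : (0 : ℝ) < x := hx
      have c0 := cdf_pos hx0
      have c1 : cdf x ≤ 1 := by have := tail_pos hx0; unfold tail at this; linarith
      rw [hg, Real.norm_eq_abs, Real.rpow_natCast,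
        show -(a / 2) * x ^ 2 = -a * x ^ 2 / 2 by ring, abs_of_nonneg (by positivity)]
      exact mul_le_of_le_one_left (by positivity) (pow_le_one₀ c0.le c1)
  have hpt : ∀ x ∈ Ioi (0 : ℝ), ‖g x - G * w a x‖ ≤
      C1 * l ^ (r - 1) * (M ^ δ * w (a + δ) x + M ^ (-δ) * w (a - δ) x) := by
    intro x hx
    have hx0 : (0 : ℝ) < x := hx
    have ht := tail_pos hx0
    have c0 : 0 ≤ cdf x ^ m := (pow_pos (cdf_pos hx0) m).le
    have e1 : g x - G * w a x = cdf x ^ m *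
        (x ^ (n - 1) * Real.exp (-a * x ^ 2 / 2) - G * (tail x ^ (a - 1) * dens x)) := by
      rw [hg, hw]; ring
    have e2 : tail x ^ (a + δ - 1) = tail x ^ (a - 1) * tail x ^ δ := by
      rw [← Real.rpow_add ht]; congr 1; ring
    have e3 : tail x ^ (a - δ - 1) = tail x ^ (a - 1) * tail x ^ (-δ) := by
      rw [← Real.rpow_add ht]; congr 1; ring
    rw [e1, Real.norm_eq_abs, abs_mul, abs_of_nonneg c0]
    refine (mul_le_mul_of_nonneg_left (h1 x M hx0 hM0 hl) c0).trans (le_of_eq ?_)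
    rw [hw, Real.mul_rpow ht.le hM0.le, Real.mul_rpow ht.le hM0.le]
    simp only [e2, e3]
    ring
  have ib : IntegrableOn
      (fun x => C1 * l ^ (r - 1) * (M ^ δ * w (a + δ) x + M ^ (-δ) * w (a - δ) x)) (Ioi 0) :=
    ((i2.const_mul _).add (i3.const_mul _)).const_mul _
  have hI := norm_integral_le_of_norm_le ib
    ((ae_restrict_iff' measurableSet_Ioi).mpr (ae_of_all _ hpt))
  rw [integral_sub ig (i1.const_mul G), integral_const_mul, integral_const_mul,
    integral_add (i2.const_mul _) (i3.const_mul _), integral_const_mul, integral_const_mul,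
    Real.norm_eq_abs] at hI
  have hMa : 0 < M ^ (-a) := by positivity
  have k2 : M ^ δ * ∫ x in Ioi 0, w (a + δ) x ≤ C2 * M ^ (-a) := by
    calc M ^ δ * ∫ x in Ioi 0, w (a + δ) x ≤ M ^ δ * (C2 * M ^ (-(a + δ))) := by
          gcongr; exact h2 m hm
      _ = C2 * (M ^ δ * M ^ (-(a + δ))) := by ring
      _ = _ := by rw [← Real.rpow_add hM0]; congr 2; ring
  have k3 : M ^ (-δ) * ∫ x in Ioi 0, w (a - δ) x ≤ C3 * M ^ (-a) := by
    calc M ^ (-δ) * ∫ x in Ioi 0, w (a - δ) x ≤ M ^ (-δ) * (C3 * M ^ (-(a - δ))) := by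
          gcongr; exact h3 m hm
      _ = C3 * (M ^ (-δ) * M ^ (-(a - δ))) := by ring
      _ = _ := by rw [← Real.rpow_add hM0]; congr 2; ring
  have k1 : |(∫ x in Ioi 0, g x) - G * ∫ x in Ioi 0, w a x| ≤
      C1 * (C2 + C3) * (M ^ (-a) * l ^ (r - 1)) := by
    refine hI.trans ?_
    calc _ ≤ C1 * l ^ (r - 1) * (C2 * M ^ (-a) + C3 * M ^ (-a)) := by gcongr
      _ = _ := by ring
  have k4 : |G * (∫ x in Ioi 0, w a x) - G * (Real.Gamma a * M ^ (-a))| ≤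
      ampl a r * (1 + |r|) * C4 * (M ^ (-a) * l ^ (r - 1)) := by
    have hlM : l ≤ M := by
      have := Real.log_le_sub_one_of_pos hM0; linarith
    rw [← mul_sub, abs_mul, hG, abs_mul, abs_of_pos hA]
    calc ampl a r * |mainTerm r l| * |(∫ x in Ioi 0, w a x) - Real.Gamma a * M ^ (-a)|
        ≤ ampl a r * ((1 + |r|) * (M * l ^ (r - 1))) * (C4 * M ^ (-a) / M) := by
          gcongr
          · exact (abs_mainTerm_le r hl).trans (by gcongr)
          · exact h4 m hm
      _ = _ := by field_simp
  have e : (∫ x in Ioi 0, g x) - ampl a r * Real.Gamma a * M ^ (-a) * mainTerm r l =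
      ((∫ x in Ioi 0, g x) - G * ∫ x in Ioi 0, w a x) +
      (G * (∫ x in Ioi 0, w a x) - G * (Real.Gamma a * M ^ (-a))) := by
    rw [hG]; ring
  rw [e, add_mul]
  exact (abs_add_le _ _).trans (add_le_add k1 k4)

/-- The substitution `s = Δ * x` in the definition of `Jmn`. -/
lemma Jmn_eq (m n : ℕ) (hn : 1 ≤ n) (Δ : ℝ) (hΔ : 0 < Δ) :
    Jmn m n Δ = (1 / (2 ^ ((n : ℝ) / 2 - 1) * Real.Gamma ((n : ℝ) / 2))) *
      (Δ ^ n * ∫ x in Ioi (0 : ℝ), cdf x ^ m *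
        (x ^ (n - 1) * Real.exp (-(Δ ^ 2) * x ^ 2 / 2))) := by
  have h := integral_comp_mul_left_Ioi (fun s : ℝ =>
    (Real.sqrt (2 / Real.pi) * ∫ x in Ioo 0 (s / Δ), Real.exp (-x ^ 2 / 2)) ^ m *
        (s ^ (n - 1) * Real.exp (-s ^ 2 / 2))) 0 hΔ
  rw [mul_zero, smul_eq_mul] at h
  have h2 : ∫ s in Ioi (0 : ℝ),
      (Real.sqrt (2 / Real.pi) * ∫ x in Ioo 0 (s / Δ), Real.exp (-x ^ 2 / 2)) ^ m *
        (s ^ (n - 1) * Real.exp (-s ^ 2 / 2)) = Δ * ∫ x in Ioi (0 : ℝ),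
      (Real.sqrt (2 / Real.pi) * ∫ t in Ioo 0 (Δ * x / Δ), Real.exp (-t ^ 2 / 2)) ^ m *
        ((Δ * x) ^ (n - 1) * Real.exp (-(Δ * x) ^ 2 / 2)) := by
    rw [h, mul_inv_cancel_left₀ hΔ.ne']
  unfold Jmn
  rw [h2]
  congr 1
  rw [← mul_pow_sub_one (by omega : n ≠ 0) Δ, mul_assoc, ← integral_const_mul (Δ ^ (n - 1))]
  congr 1
  refine setIntegral_congr_fun measurableSet_Ioi fun x hx => ?_
  have hx0 : (0 : ℝ) < x := hx
  have e1 : Δ * x / Δ = x := by field_simp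
  simp only [e1, mul_pow]
  rw [cdf, kap, intervalIntegral.integral_of_le hx0.le, integral_Ioc_eq_integral_Ioo]
  ring_nf

lemma const_eq (n : ℕ) (Δ r : ℝ) (hr : r = ((n : ℝ) + Δ ^ 2 - 2) / 2) :
    (1 / (2 ^ ((n : ℝ) / 2 - 1) * Real.Gamma ((n : ℝ) / 2))) *
      (Δ ^ n * (ampl (Δ ^ 2) r * Real.Gamma (Δ ^ 2))) =
    Real.pi ^ (Δ ^ 2 / 2) * Δ ^ n * Real.Gamma (Δ ^ 2) / Real.Gamma ((n : ℝ) / 2) := by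
  have hpi := Real.pi_pos
  have h1 : ampl (Δ ^ 2) r = Real.pi ^ (Δ ^ 2 / 2) * 2 ^ ((n : ℝ) / 2 - 1) := by
    have e1 : kap ^ (-(Δ ^ 2)) = Real.pi ^ (Δ ^ 2 / 2) * 2 ^ (-(Δ ^ 2 / 2)) := by
      rw [kap, Real.sqrt_eq_rpow, ← Real.rpow_mul (by positivity),
        Real.div_rpow (by norm_num) hpi.le,
        show 1 / 2 * -(Δ ^ 2) = -(Δ ^ 2 / 2) by ring, Real.rpow_neg hpi.le, div_inv_eq_mul]
      ring
    rw [ampl, e1, mul_assoc, ← Real.rpow_add two_pos, hr]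
    congr 2
    ring
  have h2 : (0 : ℝ) < 2 ^ ((n : ℝ) / 2 - 1) := by positivity
  rw [h1]
  field_simp

end HalfNormal

/-- Asymptotic expansion of `J_{m,n}(Δ)` as `m → ∞`, for fixed `n ≥ 1`,
`Δ > 0` and `r = (n + Δ² − 2)/2 ≠ 0`. -/
theorem stmt16 (n : ℕ) (hn : 1 ≤ n) (Δ : ℝ) (hΔ : 0 < Δ)
    (r : ℝ) (hr : r = ((n : ℝ) + Δ ^ 2 - 2) / 2) (hr0 : r ≠ 0)
    (C : ℝ)
    (hC : C = Real.pi ^ (Δ ^ 2 / 2) * Δ ^ n * Real.Gamma (Δ ^ 2) / Real.Gamma ((n : ℝ) / 2)) :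
    (fun m : ℕ => Jmn m n Δ -
        (C / ((m : ℝ) + 1) ^ (Δ ^ 2)) *
          ((Real.log ((m : ℝ) + 1)) ^ r -
            r / 2 * Real.log (Real.log ((m : ℝ) + 1)) * (Real.log ((m : ℝ) + 1)) ^ (r - 1)))
      =O[atTop]
      (fun m : ℕ => ((m : ℝ) + 1) ^ (-(Δ ^ 2)) * (Real.log ((m : ℝ) + 1)) ^ (r - 1)) := by
  obtain ⟨K, hK, h⟩ := HalfNormal.integral_asymp n hn (Δ ^ 2) r (by positivity) hr
  set c := 1 / (2 ^ ((n : ℝ) / 2 - 1) * Real.Gamma ((n : ℝ) / 2)) with hc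
  have hconst := HalfNormal.const_eq n Δ r hr
  rw [← hC, ← hc] at hconst
  refine IsBigO.of_bound (|c * Δ ^ n| * K) ?_
  filter_upwards [eventually_ge_atTop 2] with m hm
  have hm' : (2 : ℝ) ≤ m := by exact_mod_cast hm
  have hM : (0 : ℝ) < (m : ℝ) + 1 := by positivity
  -- `log (m + 1) ≥ 1` as soon as `m + 1 ≥ 3 > e`
  have hl : 1 ≤ Real.log ((m : ℝ) + 1) := by
    rw [Real.le_log_iff_exp_le hM]
    linarith [Real.exp_one_lt_d9]
  have hb := h m (by omega) hl
  rw [HalfNormal.Jmn_eq m n hn Δ hΔ, ← hc, ← hconst]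
  have hrhs : 0 ≤ ((m : ℝ) + 1) ^ (-(Δ ^ 2)) * Real.log ((m : ℝ) + 1) ^ (r - 1) := by positivity
  rw [Real.norm_eq_abs, Real.norm_eq_abs, abs_of_nonneg hrhs, mul_assoc |c * Δ ^ n|]
  refine le_trans (le_of_eq ?_) (mul_le_mul_of_nonneg_left hb (abs_nonneg (c * Δ ^ n)))
  rw [← abs_mul, Real.rpow_neg hM.le, HalfNormal.mainTerm]
  congr 1
  ring
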